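/- arXiv:1602.01505 — 2 statements merged into one kernel-verified Lean document; each statement's English description precedes it below -/
import Mathlib

section
/- Let d ≥ 1 and m ≥ 1. Let h(z) = P^z( S(τ_{Q(0,m-1)}) ∈ R_m ) be the probability that simple random walk started at z exits the cube Q(0,m-1) through the right-hand face R_m = {m} × [-m,m]^{d-1}. Then h(0) = 1/(2d), and h(z) ≤ h(0) for every z ∈ ([-m+1,0] × [-m+1,m-1]^{d-1}) ∩ Z^d. -/
open MeasureTheory
open scoped ENNReal Classical

namespace USFPaper

/-- Vertices of the nearest-neighbour integer lattice `ℤ^d`. -/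
abbrev V (d : ℕ) := Fin d → ℤ

variable {d : ℕ}

/-- Nearest-neighbour adjacency in `ℤ^d`. -/
def adj (x y : V d) : Prop := (∑ i, |x i - y i|) = 1

/-- The cube `Q(x,r) = { y : ‖x - y‖_∞ ≤ r }`. -/
def cube (x : V d) (r : ℕ) : Set (V d) := { y | ∀ i, |y i - x i| ≤ (r : ℤ) }

/-- Inner boundary `∂ᵢA` of a set `A`. -/
def innerBdry (A : Set (V d)) : Set (V d) := { x | x ∈ A ∧ ∃ y, adj x y ∧ y ∉ A }

/-- Euclidean distance on `ℤ^d`. -/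
noncomputable def eudist (x y : V d) : ℝ := Real.sqrt (∑ i, ((x i : ℝ) - (y i : ℝ)) ^ 2)

/-- The `k`-th coordinate unit vector. -/
def unitVec (k : ℕ) : V d := fun i => if (i : ℕ) = k then 1 else 0

/-- `μ` is the law of simple random walk on `ℤ^d` started at `x`, as a probability
measure on path space: every nearest-neighbour cylinder of length `n` starting at `x`
has probability `(2d)⁻ⁿ`. -/
def IsSRWLaw (μ : Measure (ℕ → V d)) (x : V d) : Prop :=
  IsProbabilityMeasure μ ∧
  ∀ (n : ℕ) (γ : ℕ → V d), γ 0 = x → (∀ i < n, adj (γ i) (γ (i + 1))) →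
    μ { ω | ∀ i ≤ n, ω i = γ i } = (2 * (d : ℝ≥0∞))⁻¹ ^ n

/-- First exit time `τ_A` from `A`, valued in `ℕ∞` (`⊤` if the path never leaves `A`). -/
noncomputable def exitTimeE (A : Set (V d)) (ω : ℕ → V d) : ENat :=
  if h : ∃ j, ω j ∉ A then (Nat.find h : ENat) else ⊤

/-- First hitting time `T_A` of `A`, valued in `ℕ∞`. -/
noncomputable def hitTimeE (A : Set (V d)) (ω : ℕ → V d) : ENat :=
  if h : ∃ j, ω j ∈ A then (Nat.find h : ENat) else ⊤

/-- First positive hitting time `T⁺_A` of `A`, valued in `ℕ∞`. -/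
noncomputable def hitTimePosE (A : Set (V d)) (ω : ℕ → V d) : ENat :=
  if h : ∃ j, 1 ≤ j ∧ ω j ∈ A then (Nat.find h : ENat) else ⊤

/-- First exit time from `A` as a natural number (junk value `0` if the path never exits). -/
noncomputable def exitTime (A : Set (V d)) (ω : ℕ → V d) : ℕ := (exitTimeE A ω).toNat

/-- Index of the first hit of `A` (junk value `0` if `A` is never hit). -/
noncomputable def hitIdx (A : Set (V d)) (γ : ℕ → V d) : ℕ := (hitTimeE A γ).toNat

/-- First index `≥ t` at which the path lies in `A` (junk value `t`). -/
noncomputable def hitIdxFrom (A : Set (V d)) (t : ℕ) (γ : ℕ → V d) : ℕ :=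
  if h : ∃ j, t ≤ j ∧ γ j ∈ A then Nat.find h else t

/-- The path frozen at its first exit from `D`. -/
noncomputable def stopAt (D : Set (V d)) (ω : ℕ → V d) : ℕ → V d :=
  fun j => if (j : ENat) ≤ exitTimeE D ω then ω j else ω (exitTime D ω)

/-- Time of the last visit of the path to the point `ω t`, at or after time `t`
(junk value if there are infinitely many such visits). -/
noncomputable def lastVisit (ω : ℕ → V d) (t : ℕ) : ℕ := sSup { j | t ≤ j ∧ ω j = ω t }

/-- The times of the chronological loop erasure (last-exit decomposition). -/
noncomputable def leTime (ω : ℕ → V d) : ℕ → ℕ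
  | 0 => lastVisit ω 0
  | k + 1 => lastVisit ω (leTime ω k + 1)

/-- Chronological loop erasure of an (infinite, transient) path. -/
noncomputable def infLoopErase (ω : ℕ → V d) : ℕ → V d := fun k => ω (leTime ω k)

/-- The loop erasure `L` of the walk stopped at its first exit from `D`. -/
noncomputable def lerw (D : Set (V d)) (ω : ℕ → V d) : ℕ → V d := infLoopErase (stopAt D ω)

/-- The event `T_A > τ_D`: the walk does not visit `A` at any time up to (and
including) its first exit from `D`; if it never exits `D`, it never visits `A`. -/
def avoidBeforeExit (D A : Set (V d)) (ω : ℕ → V d) : Prop :=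
  ∀ j : ℕ, (j : ENat) ≤ exitTimeE D ω → ω j ∉ A

/-- The event `T⁺_A > τ_D` (visits of `A` at positive times only). -/
def avoidBeforeExitPos (D A : Set (V d)) (ω : ℕ → V d) : Prop :=
  ∀ j : ℕ, 1 ≤ j → (j : ENat) ≤ exitTimeE D ω → ω j ∉ A

/-- The right-hand face (in the first coordinate direction) of the cube `Q(x₀,m)`. -/
def rightFace (x₀ : V d) (m : ℕ) : Set (V d) :=
  { y | y ∈ cube x₀ m ∧ ∀ i : Fin d, (i : ℕ) = 0 → y i = x₀ i + (m : ℤ) }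


/-- Unit steps. -/
def st (s : Fin d × Bool) : V d := Pi.single s.1 (if s.2 then 1 else -1)

/-- Averaging operator. -/
noncomputable def Av (u : V d → ℝ) (z : V d) : ℝ := (2 * (d : ℝ))⁻¹ * ∑ s, u (z + st s)

/-- Probability of exiting through `R` within `n` steps. -/
noncomputable def un (Q R : Set (V d)) : ℕ → V d → ℝ
  | 0, z => if z ∈ Q then 0 else if z ∈ R then 1 else 0
  | n + 1, z => if z ∈ Q then Av (un Q R n) z else if z ∈ R then 1 else 0

/-- Exit through `R` between times `k` and `k+n`. -/
def Ev (Q R : Set (V d)) (k n : ℕ) : Set (ℕ → V d) :=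
  {ω | ∃ t ≤ n, (ω (k + t) ∉ Q ∧ ω (k + t) ∈ R) ∧ ∀ s < t, ω (k + s) ∈ Q}

/-- Cylinder. -/
def Cy (γ : ℕ → V d) (k : ℕ) : Set (ℕ → V d) := {ω | ∀ i ≤ k, ω i = γ i}

lemma meas_coord (i : ℕ) (A : Set (V d)) : MeasurableSet {ω : ℕ → V d | ω i ∈ A} :=
  (measurable_pi_apply i) (MeasurableSet.of_discrete (s := A))

lemma meas_Cy (γ : ℕ → V d) (k : ℕ) : MeasurableSet (Cy γ k) := by
  have : Cy γ k = ⋂ i, ⋂ (_ : i ≤ k), {ω : ℕ → V d | ω i ∈ ({γ i} : Set (V d))} := by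
    ext ω; simp [Cy]
  rw [this]
  exact MeasurableSet.iInter fun i => MeasurableSet.iInter fun _ => meas_coord i _

lemma meas_Ev (Q R : Set (V d)) (k n : ℕ) : MeasurableSet (Ev Q R k n) := by
  have : Ev Q R k n = ⋃ t, ⋃ (_ : t ≤ n), ({ω : ℕ → V d | ω (k + t) ∈ Qᶜ ∩ R} ∩
      ⋂ s, ⋂ (_ : s < t), {ω : ℕ → V d | ω (k + s) ∈ Q}) := by
    ext ω; simp [Ev]
    exact exists_congr fun t => by tauto
  rw [this]
  exact MeasurableSet.iUnion fun i => MeasurableSet.iUnion fun _ =>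
    (meas_coord _ _).inter <| MeasurableSet.iInter fun i => MeasurableSet.iInter fun _ =>
      meas_coord _ _

lemma st_inj : Function.Injective (st : Fin d × Bool → V d) := by
  rintro ⟨i, b⟩ ⟨j, c⟩ h
  have h1 := congrFun h i
  simp only [st, Pi.single_apply] at h1
  by_cases hij : i = j
  · subst hij; cases b <;> cases c <;> simp_all
  · cases b <;> cases c <;> simp_all

lemma adj_st (x : V d) (s : Fin d × Bool) : adj x (x + st s) := by
  obtain ⟨i, b⟩ := s
  unfold adj
  rw [Finset.sum_eq_single i]
  · cases b <;> simp [st]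
  · intro j _ hj; simp [st, hj]
  · simp

lemma card_steps : ((Finset.univ : Finset (Fin d × Bool)).card : ℝ) = 2 * (d : ℝ) := by
  simp [mul_comm]

lemma srw_cy {μ : Measure (ℕ → V d)} {z : V d} (h : IsSRWLaw μ z) (k : ℕ) (γ : ℕ → V d)
    (h0 : γ 0 = z) (ha : ∀ i < k, adj (γ i) (γ (i + 1))) :
    μ.real (Cy γ k) = ((2 * (d : ℝ))⁻¹) ^ k := by
  have := h.2 k γ h0 ha
  unfold Measure.real Cy
  rw [this]; simp

lemma key [NeZero d] (Q R : Set (V d)) {μ : Measure (ℕ → V d)} {z : V d} (h : IsSRWLaw μ z) :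
    ∀ (n k : ℕ) (γ : ℕ → V d), γ 0 = z → (∀ i < k, adj (γ i) (γ (i + 1))) →
      μ.real (Cy γ k ∩ Ev Q R k n) = ((2 * (d : ℝ))⁻¹) ^ k * un Q R n (γ k) := by
  have := h.1
  have hd : (d : ℝ) ≠ 0 := by simp [NeZero.ne d]
  have out : ∀ (n k : ℕ) (γ : ℕ → V d), γ 0 = z → (∀ i < k, adj (γ i) (γ (i + 1))) →
      γ k ∉ Q → μ.real (Cy γ k ∩ Ev Q R k n) =
        ((2 * (d : ℝ))⁻¹) ^ k * (if γ k ∈ R then 1 else 0) := by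
    intro n k γ h0 ha hQ
    by_cases hR : γ k ∈ R
    · have : Cy γ k ∩ Ev Q R k n = Cy γ k := by
        apply Set.inter_eq_left.2
        intro ω hω
        have hk := hω k le_rfl
        exact ⟨0, Nat.zero_le _, by simpa [hk] using ⟨hQ, hR⟩, by simp⟩
      rw [this, srw_cy h k γ h0 ha]; simp [hR]
    · have : Cy γ k ∩ Ev Q R k n = ∅ := by
        apply Set.eq_empty_of_forall_notMem
        rintro ω ⟨hω, t, -, ⟨h1, h2⟩, h3⟩
        have hk := hω k le_rfl
        rcases Nat.eq_zero_or_pos t with rfl | ht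
        · exact hR (by simpa [hk] using h2)
        · exact hQ (by simpa [hk] using h3 0 ht)
      rw [this]; simp [hR]
  intro n
  induction n with
  | zero =>
    intro k γ h0 ha
    by_cases hQ : γ k ∈ Q
    · have : Cy γ k ∩ Ev Q R k 0 = ∅ := by
        apply Set.eq_empty_of_forall_notMem
        rintro ω ⟨hω, t, ht, ⟨h1, h2⟩, h3⟩
        have hk := hω k le_rfl
        obtain rfl : t = 0 := by omega
        exact h1 (by simpa [hk] using hQ)
      rw [this]; simp [un, hQ]
    · rw [out 0 k γ h0 ha hQ]; simp [un, hQ]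
  | succ n ih =>
    intro k γ h0 ha
    by_cases hQ : γ k ∈ Q
    swap
    · rw [out _ k γ h0 ha hQ]; simp [un, hQ]
    let g : Fin d × Bool → ℕ → V d := fun s => Function.update γ (k + 1) (γ k + st s)
    have gle : ∀ s i, i ≤ k → g s i = γ i := by
      intro s i hi
      exact Function.update_of_ne (by omega) _ _
    have gk : ∀ s, g s (k + 1) = γ k + st s := fun s => Function.update_self _ _ _
    have g0 : ∀ s, g s 0 = z := fun s => by rw [gle s 0 (Nat.zero_le _), h0]
    have ga : ∀ s, ∀ i < k + 1, adj (g s i) (g s (i + 1)) := by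
      intro s i hi
      rcases Nat.lt_succ_iff_lt_or_eq.1 hi with hi | rfl
      · rw [gle s i hi.le, gle s (i + 1) hi]; exact ha i hi
      · rw [gle s i le_rfl, gk]; exact adj_st _ _
    have hsub : (⋃ s, Cy (g s) (k + 1)) ⊆ Cy γ k := by
      intro ω hω
      obtain ⟨s, hs⟩ := Set.mem_iUnion.1 hω
      intro i hi
      rw [hs i (by omega), gle s i hi]
    have hdisj : Pairwise (Function.onFun Disjoint fun s => Cy (g s) (k + 1)) := by
      intro s t hst
      rw [Function.onFun, Set.disjoint_left]
      intro ω h1 h2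
      have e1 := h1 (k + 1) le_rfl
      have e2 := h2 (k + 1) le_rfl
      rw [gk] at e1 e2
      exact hst (st_inj (add_left_cancel (e1.symm.trans e2)))
    have hU : μ.real (⋃ s, Cy (g s) (k + 1)) = μ.real (Cy γ k) := by
      rw [measureReal_iUnion_fintype hdisj (fun s => meas_Cy _ _)]
      rw [Finset.sum_congr rfl fun s _ => srw_cy h (k + 1) (g s) (g0 s) (ga s)]
      rw [srw_cy h k γ h0 ha, Finset.sum_const, nsmul_eq_mul, card_steps, pow_succ]
      field_simp
    have hae : (⋃ s, Cy (g s) (k + 1) : Set (ℕ → V d)) =ᵐ[μ] Cy γ k := by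
      apply ae_eq_of_subset_of_measure_ge hsub
      · rw [← ENNReal.toReal_le_toReal (measure_ne_top _ _) (measure_ne_top _ _)]
        exact hU.ge
      · exact (MeasurableSet.iUnion fun s => meas_Cy _ _).nullMeasurableSet
      · exact measure_ne_top _ _
    have hE : ∀ s, Cy (g s) (k + 1) ∩ Ev Q R k (n + 1) = Cy (g s) (k + 1) ∩ Ev Q R (k + 1) n := by
      intro s
      ext ω
      simp only [Set.mem_inter_iff, and_congr_right_iff]
      intro hω
      have hk : ω k ∈ Q := by rw [hω k (by omega), gle s k le_rfl]; exact hQ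
      constructor
      · rintro ⟨t, ht, h1, h2⟩
        cases t with
        | zero => exact absurd hk h1.1
        | succ t =>
          refine ⟨t, by omega, ?_, ?_⟩
          · rw [show k + 1 + t = k + (t + 1) by omega]; exact h1
          · intro r hr
            rw [show k + 1 + r = k + (r + 1) by omega]; exact h2 _ (by omega)
      · rintro ⟨t, ht, h1, h2⟩
        refine ⟨t + 1, by omega, ?_, ?_⟩
        · rw [show k + (t + 1) = k + 1 + t by omega]; exact h1
        · intro r hr
          cases r with
          | zero => exact hk
          | succ r => rw [show k + (r + 1) = k + 1 + r by omega]; exact h2 _ (by omega)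
    have e1 : μ.real (Cy γ k ∩ Ev Q R k (n + 1)) =
        μ.real ((⋃ s, Cy (g s) (k + 1)) ∩ Ev Q R k (n + 1)) := by
      unfold Measure.real
      congr 1
      exact measure_congr (hae.symm.inter (ae_eq_refl _))
    rw [e1, Set.iUnion_inter, measureReal_iUnion_fintype]
    · rw [Finset.sum_congr rfl fun s _ => by rw [hE s, ih (k + 1) (g s) (g0 s) (ga s), gk]]
      rw [← Finset.mul_sum]
      simp only [un, hQ, if_true, Av]
      ring
    · intro s t hst
      exact (hdisj hst).mono Set.inter_subset_left Set.inter_subset_left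
    · intro s; exact (meas_Cy _ _).inter (meas_Ev _ _ _ _)

lemma Av_mono {u v : V d → ℝ} (h : ∀ z, u z ≤ v z) (z : V d) : Av u z ≤ Av v z := by
  unfold Av
  have : ∑ s, u (z + st s) ≤ ∑ s, v (z + st s) := Finset.sum_le_sum fun s _ => h _
  gcongr

lemma Av_const [NeZero d] (c : ℝ) (z : V d) : Av (fun _ => c) z = c := by
  have hd : (d : ℝ) ≠ 0 := by simp [NeZero.ne d]
  unfold Av
  rw [Finset.sum_const, nsmul_eq_mul, card_steps]
  field_simp

lemma un_nonneg (Q R : Set (V d)) (n : ℕ) : ∀ z, 0 ≤ un Q R n z := by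
  induction n with
  | zero => intro z; unfold un; split_ifs <;> norm_num
  | succ n ih =>
    intro z; unfold un; split_ifs <;> try norm_num
    exact mul_nonneg (by positivity) (Finset.sum_nonneg fun s _ => ih _)

lemma un_le_one [NeZero d] (Q R : Set (V d)) (n : ℕ) : ∀ z, un Q R n z ≤ 1 := by
  induction n with
  | zero => intro z; unfold un; split_ifs <;> norm_num
  | succ n ih =>
    intro z; unfold un; split_ifs <;> try norm_num
    exact (Av_mono ih z).trans (Av_const 1 z).le

lemma un_mono (Q R : Set (V d)) (n : ℕ) : ∀ z, un Q R n z ≤ un Q R (n + 1) z := by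
  induction n with
  | zero =>
    intro z
    by_cases hz : z ∈ Q
    · have := un_nonneg Q R 1 z
      simpa [un, hz] using this
    · simp [un, hz]
  | succ n ih =>
    intro z
    by_cases hz : z ∈ Q
    · rw [un, un]; simp only [hz, if_true]; exact Av_mono ih z
    · simp [un, hz]

/-- The limit. -/
noncomputable def H (Q R : Set (V d)) (z : V d) : ℝ := ⨆ n, un Q R n z

lemma H_tendsto [NeZero d] (Q R : Set (V d)) (z : V d) :
    Filter.Tendsto (fun n => un Q R n z) Filter.atTop (nhds (H Q R z)) :=
  tendsto_atTop_ciSup (monotone_nat_of_le_succ fun n => un_mono Q R n z)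
    ⟨1, by rintro _ ⟨n, rfl⟩; exact un_le_one Q R n z⟩

lemma H_out [NeZero d] (Q R : Set (V d)) (z : V d) (hz : z ∉ Q) :
    H Q R z = if z ∈ R then 1 else 0 := by
  refine tendsto_nhds_unique (H_tendsto Q R z) ?_
  refine tendsto_const_nhds.congr fun n => ?_
  cases n <;> simp [un, hz]

lemma H_in [NeZero d] (Q R : Set (V d)) (z : V d) (hz : z ∈ Q) :
    H Q R z = Av (H Q R) z := by
  refine tendsto_nhds_unique ((Filter.tendsto_add_atTop_iff_nat 1).2 (H_tendsto Q R z)) ?_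
  simp only [un, hz, if_true, Av]
  exact (tendsto_finsetSum _ fun s _ => H_tendsto Q R _).const_mul _

lemma H_nonneg [NeZero d] (Q R : Set (V d)) (z : V d) : 0 ≤ H Q R z :=
  ge_of_tendsto' (H_tendsto Q R z) fun n => un_nonneg Q R n z

lemma prob_eq [NeZero d] (Q R : Set (V d)) {μ : Measure (ℕ → V d)} {z : V d} (h : IsSRWLaw μ z)
    (hz : z ∈ Q) (hQR : ∀ y ∈ Q, y ∉ R) :
    (μ {ω | ω (exitTime Q ω) ∈ R}).toReal = H Q R z := by
  have := h.1
  set γ : ℕ → V d := fun _ => z with hγ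
  have hn : ∀ n, μ.real (Cy γ 0 ∩ Ev Q R 0 n) = un Q R n z := by
    intro n
    rw [key Q R h n 0 γ rfl (by simp)]; simp [hγ]
  have hfull : ∀ᵐ ω ∂μ, ω ∈ Cy γ 0 := by
    have h1 : μ (Cy γ 0) = 1 := by
      have := h.2 0 γ rfl (by simp)
      simpa [Cy] using this
    exact (prob_compl_eq_zero_iff (meas_Cy γ 0)).2 h1
  have hset : μ {ω | ω (exitTime Q ω) ∈ R} = μ (⋃ n, (Cy γ 0 ∩ Ev Q R 0 n)) := by
    apply measure_congr
    filter_upwards [hfull] with ω hω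
    have h0 : ω 0 = z := hω 0 le_rfl
    apply propext
    change ω (exitTime Q ω) ∈ R ↔ ω ∈ ⋃ n, (Cy γ 0 ∩ Ev Q R 0 n)
    simp only [Set.mem_iUnion, Set.mem_inter_iff, hω, true_and]
    by_cases hex : ∃ j, ω j ∉ Q
    · have hτ : exitTime Q ω = Nat.find hex := by simp [exitTime, exitTimeE, hex]
      rw [hτ]
      constructor
      · intro hR
        refine ⟨Nat.find hex, Nat.find hex, le_rfl, ?_, ?_⟩
        · rw [zero_add]; exact ⟨Nat.find_spec hex, hR⟩
        · intro s hs; rw [zero_add]; exact not_not.1 (Nat.find_min hex hs)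
      · rintro ⟨n, t, ht, ⟨h1, h2⟩, h3⟩
        simp only [zero_add] at h1 h2 h3
        have : Nat.find hex = t := by
          rw [Nat.find_eq_iff]
          exact ⟨h1, fun s hs => not_not.2 (h3 s hs)⟩
        rw [this]; exact h2
    · have hτ : exitTime Q ω = 0 := by simp [exitTime, exitTimeE, hex]
      rw [hτ, h0]
      constructor
      · intro hR; exact absurd hR (hQR z hz)
      · rintro ⟨n, t, ht, ⟨h1, h2⟩, h3⟩
        exact absurd ⟨_, h1⟩ hex
  rw [hset]
  have hm : Monotone fun n => Cy γ 0 ∩ Ev Q R 0 n := by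
    intro a b hab
    apply Set.inter_subset_inter_right
    rintro ω ⟨t, ht, h1⟩
    exact ⟨t, ht.trans hab, h1⟩
  have := (ENNReal.tendsto_toReal (measure_ne_top μ _)).comp (tendsto_measure_iUnion_atTop (μ := μ) hm)
  refine tendsto_nhds_unique this ?_
  refine (H_tendsto Q R z).congr fun n => ?_
  exact (hn n).symm

lemma max_principle [NeZero d] (D : Set (V d)) (hD : D.Finite) (v : V d → ℝ)
    (hv : ∀ z ∈ D, 0 < v z → v z ≤ Av v z)
    (hb : ∀ z ∈ D, ∀ s, z + st s ∉ D → v (z + st s) ≤ 0) :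
    ∀ z ∈ D, v z ≤ 0 := by
  by_contra! hcon
  obtain ⟨z₀, hz₀, hpos⟩ := hcon
  obtain ⟨y, hyD, hy⟩ := Set.exists_max_image D v hD ⟨z₀, hz₀⟩
  have hM : 0 < v y := hpos.trans_le (hy _ hz₀)
  obtain ⟨x, ⟨hxD, hxv⟩, hx⟩ := Set.exists_max_image {x ∈ D | v x = v y} (fun x => x 0)
    (hD.subset fun _ h => h.1) ⟨y, hyD, rfl⟩
  have hle : ∀ s, v (x + st s) ≤ v y := by
    intro s
    by_cases hs : x + st s ∈ D
    · exact hy _ hs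
    · exact (hb x hxD s hs).trans hM.le
  have hlt : v (x + st (0, true)) < v y := by
    by_cases hs : x + st (0, true) ∈ D
    · refine lt_of_le_of_ne (hle _) fun he => ?_
      have := hx _ ⟨hs, he⟩
      simp [st] at this
    · exact (hb x hxD _ hs).trans_lt hM
  have h1 := hv x hxD (hxv ▸ hM)
  have h2 : Av v x < Av (fun _ => v y) x := by
    unfold Av
    have hd : (0 : ℝ) < d := by simp [Nat.pos_of_ne_zero (NeZero.ne d)]
    have : ∑ s, v (x + st s) < ∑ s : Fin d × Bool, v y :=
      Finset.sum_lt_sum (fun s _ => hle s) ⟨_, Finset.mem_univ _, hlt⟩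
    exact mul_lt_mul_of_pos_left this (by positivity)
  rw [Av_const] at h2
  linarith

lemma Av_sub (u v : V d → ℝ) (z : V d) : Av (fun y => u y - v y) z = Av u z - Av v z := by
  unfold Av; rw [Finset.sum_sub_distrib]; ring

lemma Av_sum {ι : Type*} (t : Finset ι) (u : ι → V d → ℝ) (z : V d) :
    Av (fun y => ∑ i ∈ t, u i y) z = ∑ i ∈ t, Av (u i) z := by
  unfold Av; rw [Finset.sum_comm, Finset.mul_sum]

lemma Av_comp (u : V d → ℝ) (σ : V d → V d) (e : Fin d × Bool ≃ Fin d × Bool)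
    (h : ∀ z s, σ (z + st s) = σ z + st (e s)) (z : V d) :
    Av (fun y => u (σ y)) z = Av u (σ z) := by
  unfold Av
  congr 1
  simp only [h]
  exact e.sum_comp fun s => u (σ z + st s)

lemma mem_cube (k : ℕ) (z : V d) : z ∈ cube 0 k ↔ ∀ i, |z i| ≤ (k : ℤ) := by
  simp [cube]

lemma cube_finite (k : ℕ) : (cube (0 : V d) k).Finite := by
  apply (Set.finite_Icc (fun _ => -(k : ℤ) : V d) (fun _ => (k : ℤ))).subset
  intro z hz
  rw [mem_cube] at hz
  exact ⟨fun i => (abs_le.1 (hz i)).1, fun i => (abs_le.1 (hz i)).2⟩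

lemma mem_face [NeZero d] (m : ℕ) (z : V d) :
    z ∈ rightFace 0 m ↔ (∀ i, |z i| ≤ (m : ℤ)) ∧ z 0 = m := by
  simp only [rightFace, Set.mem_ofPred_eq, mem_cube, Pi.zero_apply, zero_add]
  refine and_congr_right fun _ => ⟨fun h => h 0 (by simp), fun h i hi => ?_⟩
  have : i = 0 := Fin.ext (by simpa using hi)
  rw [this, h]

lemma st_apply (i j : Fin d) (b : Bool) :
    st (i, b) j = if j = i then (if b then 1 else -1) else 0 := by
  simp [st, Pi.single_apply]

/-- Reflection in coordinate `j`. -/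
def refl (j : Fin d) (z : V d) : V d := fun i => if i = j then -z i else z i

/-- Reflection acting on steps. -/
def reflE (j : Fin d) : Fin d × Bool ≃ Fin d × Bool :=
  Function.Involutive.toPerm (fun s => (s.1, if s.1 = j then !s.2 else s.2)) (by
    rintro ⟨i, b⟩
    by_cases h : i = j <;> simp [h])

lemma refl_st (j : Fin d) (z : V d) (s : Fin d × Bool) :
    refl j (z + st s) = refl j z + st (reflE j s) := by
  obtain ⟨i, b⟩ := s
  funext l
  have he : reflE j (i, b) = (i, if i = j then !b else b) := rfl
  simp only [refl, he, Pi.add_apply, st_apply]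
  by_cases h1 : l = j <;> by_cases h2 : l = i <;> by_cases h3 : i = j <;> cases b <;>
    simp_all <;> ring

lemma refl_refl (j : Fin d) (z : V d) : refl j (refl j z) = z := by
  funext l; simp only [refl]; split_ifs <;> simp

lemma abs_refl (j : Fin d) (z : V d) (i : Fin d) : |refl j z i| = |z i| := by
  simp only [refl]; split_ifs <;> simp

/-- Rotation taking direction `s` to direction `(0,true)`. -/
def rot [NeZero d] (s : Fin d × Bool) (z : V d) : V d :=
  fun i => if s.2 then z (Equiv.swap 0 s.1 i) else -z (Equiv.swap 0 s.1 i)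

/-- Rotation acting on steps. -/
def rotE [NeZero d] (s : Fin d × Bool) : Fin d × Bool ≃ Fin d × Bool :=
  Function.Involutive.toPerm
    (fun t => (Equiv.swap 0 s.1 t.1, if s.2 then t.2 else !t.2)) (by
    rintro ⟨i, b⟩
    by_cases h : s.2 <;> simp [h])

lemma rot_st [NeZero d] (s : Fin d × Bool) (z : V d) (t : Fin d × Bool) :
    rot s (z + st t) = rot s z + st (rotE s t) := by
  obtain ⟨i, b⟩ := t
  obtain ⟨j, c⟩ := s
  funext l
  have hs : Equiv.swap 0 j l = i ↔ l = Equiv.swap 0 j i := by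
    rw [← Equiv.apply_eq_iff_eq (Equiv.swap 0 j)]; simp
  have he : rotE (j, c) (i, b) = (Equiv.swap 0 j i, if c then b else !b) := rfl
  simp only [rot, he, Pi.add_apply, st_apply, hs]
  by_cases h1 : l = Equiv.swap 0 j i <;> cases b <;> cases c <;> simp [h1] <;> ring

section main
variable [NeZero d] (k : ℕ)

/-- The exit probability. -/
noncomputable def hh (z : V d) : ℝ := H (cube 0 k) (rightFace 0 (k + 1)) z

lemma hh_in (z : V d) (hz : ∀ i, |z i| ≤ (k : ℤ)) : hh k z = Av (hh k) z :=
  H_in _ _ z ((mem_cube k z).2 hz)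

lemma hh_out (z : V d) (hz : ¬ ∀ i, |z i| ≤ (k : ℤ)) :
    hh k z = if (∀ i, |z i| ≤ (k : ℤ) + 1) ∧ z 0 = k + 1 then 1 else 0 := by
  unfold hh
  rw [H_out _ _ z (by rwa [mem_cube])]
  simp [mem_face]

lemma hh_nonneg (z : V d) : 0 ≤ hh k z := H_nonneg _ _ z

lemma rot_cube (s : Fin d × Bool) (z : V d) (n : ℤ) :
    (∀ i, |rot s z i| ≤ n) ↔ ∀ i, |z i| ≤ n := by
  have : ∀ i, |rot s z i| = |z (Equiv.swap 0 s.1 i)| := by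
    intro i; simp only [rot]; split_ifs <;> simp
  simp only [this]
  exact (Equiv.swap 0 s.1).forall_congr_left.trans (by simp)

/-- Sum over all faces. -/
noncomputable def W (z : V d) : ℝ := ∑ s : Fin d × Bool, hh k (rot s z)

lemma W_in (z : V d) (hz : ∀ i, |z i| ≤ (k : ℤ)) : W k z = Av (W k) z := by
  unfold W
  rw [Av_sum]
  refine Finset.sum_congr rfl fun s _ => ?_
  rw [Av_comp (hh k) (rot s) (rotE s) (rot_st s), hh_in k _ ((rot_cube s z k).2 hz)]

lemma W_bd (z : V d) (hz : ∀ i, |z i| ≤ (k : ℤ)) (t : Fin d × Bool)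
    (ht : ¬ ∀ i, |(z + st t) i| ≤ (k : ℤ)) : W k (z + st t) = 1 := by
  obtain ⟨j, b⟩ := t
  set y := z + st (j, b) with hy
  have hyi : ∀ i, i ≠ j → y i = z i := by
    intro i hi; simp [hy, st_apply, hi]
  have hyj : y j = z j + (if b then 1 else -1) := by simp [hy, st_apply]
  have hj := abs_le.1 (hz j)
  have hyk : y j = if b then (k : ℤ) + 1 else -((k : ℤ) + 1) := by
    by_contra hne
    apply ht
    intro i
    by_cases hi : i = j
    · subst hi
      rw [abs_le]
      cases b <;> simp at hyj hne <;> omega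
    · rw [hyi i hi]; exact hz i
  have hy1 : ∀ i, |y i| ≤ (k : ℤ) + 1 := by
    intro i
    by_cases hi : i = j
    · subst hi
      rw [hyk, abs_le]; split_ifs <;> constructor <;> omega
    · rw [hyi i hi]; linarith [hz i]
  have hval : ∀ s : Fin d × Bool, hh k (rot s y) = if s = (j, b) then 1 else 0 := by
    rintro ⟨i, c⟩
    rw [hh_out k _ (by rwa [rot_cube])]
    congr 1
    rw [rot_cube]
    simp only [rot, Equiv.swap_apply_left, Prod.mk.injEq, eq_iff_iff]
    constructor
    · rintro ⟨-, h⟩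
      by_cases hi : i = j
      · subst hi
        refine ⟨rfl, ?_⟩
        rw [hyk] at h
        cases b <;> cases c <;> simp at h ⊢ <;> omega
      · have := abs_le.1 (hz i)
        rw [hyi i hi] at h
        exfalso
        cases c <;> simp at h <;> omega
    · rintro ⟨rfl, rfl⟩
      refine ⟨hy1, ?_⟩
      rw [hyk]; cases c <;> simp
  unfold W
  simp [hval]

lemma W_eq_one (z : V d) (hz : ∀ i, |z i| ≤ (k : ℤ)) : W k z = 1 := by
  have h1 := max_principle (cube (0 : V d) k) (cube_finite k) (fun y => W k y - 1)
    (by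
      intro y hy _
      rw [mem_cube] at hy
      rw [Av_sub (W k) (fun _ => 1), Av_const, ← W_in k y hy])
    (by
      intro y hy s hs
      rw [mem_cube] at hy hs
      simp [W_bd k y hy s hs]) z ((mem_cube k z).2 hz)
  have h2 := max_principle (cube (0 : V d) k) (cube_finite k) (fun y => 1 - W k y)
    (by
      intro y hy _
      rw [mem_cube] at hy
      rw [Av_sub (fun _ => 1) (W k), Av_const, ← W_in k y hy])
    (by
      intro y hy s hs
      rw [mem_cube] at hy hs
      simp [W_bd k y hy s hs]) z ((mem_cube k z).2 hz)
  linarith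

lemma hh_zero : hh k (0 : V d) = 1 / (2 * (d : ℝ)) := by
  have h := W_eq_one k (0 : V d) (by simp)
  have hr : ∀ s : Fin d × Bool, rot s (0 : V d) = 0 := by
    intro s; funext i; simp [rot]
  unfold W at h
  simp only [hr] at h
  rw [Finset.sum_const, nsmul_eq_mul, card_steps] at h
  have hd : (d : ℝ) ≠ 0 := by simp [NeZero.ne d]
  field_simp
  linarith

lemma hh_refl_le (j : Fin d) (hj : j ≠ 0) (z : V d) : hh k z ≤ hh k (refl j z) := by
  have hout : ∀ y : V d, (¬ ∀ i, |y i| ≤ (k : ℤ)) → hh k y = hh k (refl j y) := by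
    intro y hy
    rw [hh_out k y hy, hh_out k (refl j y) (by simpa [abs_refl] using hy)]
    simp only [abs_refl]
    simp [refl, hj.symm]
  by_cases hz : ∀ i, |z i| ≤ (k : ℤ)
  swap
  · exact (hout z hz).le
  have h1 := max_principle (cube (0 : V d) k) (cube_finite k)
    (fun y => hh k y - hh k (refl j y))
    (by
      intro y hy _
      rw [mem_cube] at hy
      rw [Av_sub (hh k) (fun y => hh k (refl j y)), Av_comp (hh k) (refl j) _ (refl_st j),
        ← hh_in k y hy, ← hh_in k (refl j y) (by simpa [abs_refl] using hy)])
    (by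
      intro y hy s hs
      rw [mem_cube] at hs
      simp [← hout _ hs]) z ((mem_cube k z).2 hz)
  linarith

lemma hh_refl (j : Fin d) (hj : j ≠ 0) (z : V d) : hh k (refl j z) = hh k z := by
  apply le_antisymm _ (hh_refl_le k j hj z)
  have := hh_refl_le k j hj (refl j z)
  rwa [refl_refl] at this

/-- Monotonicity in coordinate `j`. -/
lemma hh_step (j : Fin d) (hj : j ≠ 0) (z : V d) (hz : ∀ i, |z i| ≤ (k : ℤ)) (hzj : 0 ≤ z j) :
    hh k (z + st (j, true)) ≤ hh k z := by
  set e : V d := st (j, true) with he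
  have hej : e j = 1 := by simp [he, st_apply]
  have hei : ∀ i, i ≠ j → e i = 0 := by intro i hi; simp [he, st_apply, hi]
  -- outside, top
  have htop : ∀ y : V d, (∀ i, |y i| ≤ (k : ℤ)) → k ≤ y j → hh k (y + e) ≤ hh k y := by
    intro y hy hyk
    rw [hh_out k (y + e)]
    · rw [if_neg]
      · exact hh_nonneg k y
      · rintro ⟨-, h⟩
        have := abs_le.1 (hy 0)
        simp [hei 0 hj.symm] at h
        omega
    · intro h
      have := abs_le.1 (h j)
      simp [hej] at this
      omega
  by_cases hk : (k : ℤ) ≤ z j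
  · exact htop z hz hk
  let D : Set (V d) := {y | (∀ i, |y i| ≤ (k : ℤ)) ∧ 0 ≤ y j ∧ y j < k}
  have hDf : D.Finite := (cube_finite k).subset fun y hy => (mem_cube k y).2 hy.1
  let v : V d → ℝ := fun y => if 0 ≤ y j then hh k (y + e) - hh k y else 0
  have hcomm : ∀ y : V d, Av (fun x => hh k (x + e)) y = Av (hh k) (y + e) :=
    Av_comp (hh k) (fun x => x + e) (Equiv.refl _) (fun z s => by
      simp [add_right_comm])
  have hin : ∀ y ∈ D, hh k (y + e) - hh k y = Av (fun x => hh k (x + e) - hh k x) y := by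
    intro y hy
    rw [Av_sub (fun x => hh k (x + e)) (hh k), hcomm, ← hh_in k y hy.1, ← hh_in k (y + e)]
    intro i
    by_cases hi : i = j
    · subst hi
      have := hy.2
      rw [abs_le]; simp [hej]; omega
    · simpa [hei i hi] using hy.1 i
  have key := max_principle D hDf v
    (by
      intro y hy hpos
      have hvy : v y = hh k (y + e) - hh k y := if_pos hy.2.1
      rw [hvy] at hpos ⊢
      rw [hin y hy]
      unfold Av
      refine mul_le_mul_of_nonneg_left (Finset.sum_le_sum fun s _ => ?_) (by positivity)
      simp only [v]
      split_ifs with hs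
      · exact le_rfl
      · -- reflected term
        obtain ⟨i, b⟩ := s
        have hy1 := hy.2.1
        have hsj : i = j ∧ b = false ∧ y j = 0 := by
          simp only [Pi.add_apply, st_apply] at hs
          by_cases hij : j = i
          · subst hij
            cases b <;> simp at hs ⊢ <;> omega
          · simp [hij] at hs; omega
        obtain ⟨rfl, rfl, hy0⟩ := hsj
        have e1 : y + st (i, false) + e = y := by
          funext l; simp [he, st_apply]; split_ifs <;> simp
        have e2 : refl i (y + st (i, false)) = y + e := by
          funext l
          by_cases hl : l = i
          · subst hl; simp [refl, he, st_apply, hy0]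
          · simp [refl, he, st_apply, hl]
        rw [e1, ← hh_refl k i hj (y + st (i, false)), e2]
        linarith)
    (by
      intro y hy s hs
      simp only [v]
      split_ifs with h0
      swap
      · exact le_rfl
      rw [sub_nonpos]
      by_cases hc : ∀ i, |(y + st s) i| ≤ (k : ℤ)
      · apply htop _ hc
        by_contra hlt
        exact hs ⟨hc, h0, not_le.1 hlt⟩
      · -- both outside
        obtain ⟨i, b⟩ := s
        have hij : i ≠ j := by
          rintro rfl
          apply hc
          intro l
          have hyl := hy.1 l
          have := hy.2
          by_cases hl : l = i
          · subst hl
            simp [st_apply] at h0 ⊢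
            rw [abs_le]
            cases b <;> simp at h0 ⊢ <;> omega
          · simpa [st_apply, hl] using hyl
        have hyj : (y + st (i, b)) j = y j := by simp [st_apply, hij.symm]
        set x := y + st (i, b) with hx
        have hc2 : ¬ ∀ l, |(x + e) l| ≤ (k : ℤ) := by
          intro h
          apply hc
          intro l
          by_cases hl : l = j
          · subst hl; rw [hyj]; exact hy.1 l
          · simpa [hei l hl] using h l
        rw [hh_out k _ hc, hh_out k _ hc2]
        by_cases hA : (∀ l, |(x + e) l| ≤ (k : ℤ) + 1) ∧ (x + e) 0 = k + 1
        · rw [if_pos hA, if_pos]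
          refine ⟨fun l => ?_, by simpa [hei 0 hj.symm] using hA.2⟩
          by_cases hl : l = j
          · subst hl; rw [hyj]; linarith [hy.1 l]
          · simpa [hei l hl] using hA.1 l
        · rw [if_neg hA]; split_ifs <;> norm_num)
    z ⟨hz, hzj, not_le.1 hk⟩
  simp only [v, if_pos hzj] at key
  linarith

lemma hh_kill_nonneg (j : Fin d) (hj : j ≠ 0) (n : ℕ) : ∀ z : V d, (∀ i, |z i| ≤ (k : ℤ)) →
    z j = n → hh k z ≤ hh k (Function.update z j 0) := by
  induction n with
  | zero =>
    intro z hz h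
    rw [show Function.update z j 0 = z by
      rw [Function.update_eq_self_iff]; simpa using h.symm]
  | succ n ih =>
    intro z hz h
    have hb := abs_le.1 (hz j)
    push_cast at h
    set y := Function.update z j (n : ℤ) with hy
    have hyz : y + st (j, true) = z := by
      funext l
      by_cases hl : l = j
      · subst hl; simp [hy, st_apply, h]
      · simp [hy, st_apply, hl]
    have hyc : ∀ i, |y i| ≤ (k : ℤ) := by
      intro l
      by_cases hl : l = j
      · subst hl; simp [hy]; omega
      · simpa [hy, hl] using hz l
    have h1 := hh_step k j hj y hyc (by simp [hy])
    rw [hyz] at h1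
    refine h1.trans ?_
    have := ih y hyc (by simp [hy])
    simpa [hy] using this

lemma hh_kill (j : Fin d) (hj : j ≠ 0) (z : V d) (hz : ∀ i, |z i| ≤ (k : ℤ)) :
    hh k z ≤ hh k (Function.update z j 0) := by
  rcases le_total 0 (z j) with h | h
  · exact hh_kill_nonneg k j hj (z j).toNat z hz (by omega)
  · rw [← hh_refl k j hj z]
    have := hh_kill_nonneg k j hj (-z j).toNat (refl j z) (by simpa [abs_refl] using hz)
      (by simp [refl]; omega)
    convert this using 2
    funext l
    by_cases hl : l = j
    · subst hl; simp
    · simp [hl, refl]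

lemma hh_level (z : V d) (hz : ∀ i, |z i| ≤ (k : ℤ)) (h0 : z 0 = 0) : hh k z ≤ hh k (0 : V d) := by
  have : ∀ S : Finset (Fin d), hh k z ≤ hh k (fun i => if i ∈ S then 0 else z i) := by
    intro S
    induction S using Finset.induction_on with
    | empty => simp
    | insert j S hjS ih =>
      refine ih.trans ?_
      by_cases hj : j = 0
      · subst hj
        apply le_of_eq
        congr 1
        funext i
        by_cases hi : i = 0
        · subst hi; simp [h0]
        · simp [hi]
      · refine (hh_kill k j hj _ ?_).trans_eq ?_
        · intro i
          by_cases hi : i ∈ S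
          · simp [hi]
          · simpa [hi] using hz i
        · congr 1
          funext i
          by_cases hi : i = j
          · subst hi; simp
          · simp [hi]
  have h := this Finset.univ
  simp only [Finset.mem_univ, if_true] at h
  exact h

lemma hh_left (z : V d) (hz : ∀ i, |z i| ≤ (k : ℤ)) (h0 : z 0 ≤ 0) : hh k z ≤ hh k (0 : V d) := by
  rcases h0.eq_or_lt with h0 | h0
  · exact hh_level k z hz h0
  let D : Set (V d) := {y | (∀ i, |y i| ≤ (k : ℤ)) ∧ y 0 < 0}
  have hDf : D.Finite := (cube_finite k).subset fun y hy => (mem_cube k y).2 hy.1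
  have := max_principle D hDf (fun y => hh k y - hh k (0 : V d))
    (by
      intro y hy _
      rw [Av_sub (hh k) (fun _ => hh k (0 : V d)), Av_const, ← hh_in k y hy.1])
    (by
      intro y hy s hs
      rw [sub_nonpos]
      have hle : (y + st s) 0 ≤ 0 := by
        obtain ⟨i, b⟩ := s
        have := hy.2
        simp only [Pi.add_apply, st_apply]
        split_ifs <;> omega
      by_cases hc : ∀ i, |(y + st s) i| ≤ (k : ℤ)
      · apply hh_level k _ hc
        by_contra hne
        exact hs ⟨hc, lt_of_le_of_ne hle hne⟩
      · rw [hh_out k _ hc, if_neg]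
        · exact hh_nonneg k 0
        · rintro ⟨-, h⟩
          omega)
    z ⟨hz, h0⟩
  linarith

lemma prob_hh {μ : Measure (ℕ → V d)} {z : V d} (h : IsSRWLaw μ z)
    (hz : ∀ i, |z i| ≤ (k : ℤ)) :
    (μ {ω | ω (exitTime (cube 0 k) ω) ∈ rightFace 0 (k + 1)}).toReal = hh k z := by
  apply prob_eq _ _ h ((mem_cube k z).2 hz)
  intro y hy hR
  rw [mem_cube] at hy
  rw [mem_face] at hR
  have := abs_le.1 (hy 0)
  have := hR.2
  push_cast at this
  omega

end main

/-- (Part of Lemma 3.4.)  Let `d ≥ 1`, `m ≥ 1`, and let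
`h(z) = P^z( S(τ_{Q(0,m-1)}) ∈ R_m )` be the probability that simple random walk
started at `z` exits `Q(0,m-1)` through the right-hand face `R_m = {m} × [-m,m]^{d-1}`.
Then `h(0) = 1/(2d)`, and `h(z) ≤ h(0)` for every
`z ∈ ([-m+1,0] × [-m+1,m-1]^{d-1}) ∩ ℤ^d`. -/
theorem exit_face_max_at_zero :
    ∀ d m : ℕ, 1 ≤ d → 1 ≤ m →
      (∀ μ : Measure (ℕ → V d), IsSRWLaw μ 0 →
        (μ { ω | ω (exitTime (cube 0 (m - 1)) ω) ∈ rightFace 0 m }).toReal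
          = 1 / (2 * (d : ℝ))) ∧
      (∀ z : V d,
        (∀ i : Fin d, (i : ℕ) = 0 → -(m : ℤ) + 1 ≤ z i ∧ z i ≤ 0) →
        (∀ i : Fin d, (i : ℕ) ≠ 0 → -(m : ℤ) + 1 ≤ z i ∧ z i ≤ (m : ℤ) - 1) →
        ∀ μz μ₀ : Measure (ℕ → V d), IsSRWLaw μz z → IsSRWLaw μ₀ 0 →
          (μz { ω | ω (exitTime (cube 0 (m - 1)) ω) ∈ rightFace 0 m }).toReal
            ≤ (μ₀ { ω | ω (exitTime (cube 0 (m - 1)) ω) ∈ rightFace 0 m }).toReal) := by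
  intro d m hd hm
  obtain ⟨k, rfl⟩ : ∃ k, m = k + 1 := ⟨m - 1, by omega⟩
  have : NeZero d := ⟨by omega⟩
  simp only [Nat.add_sub_cancel]
  refine ⟨fun μ hμ => ?_, fun z hz0 hz1 μz μ₀ hμz hμ₀ => ?_⟩
  · rw [prob_hh k hμ (by simp), hh_zero]
  · have hz : ∀ i, |z i| ≤ (k : ℤ) := by
      intro i
      rw [abs_le]
      by_cases hi : (i : ℕ) = 0
      · have := hz0 i hi
        push_cast at this
        omega
      · have := hz1 i hi
        push_cast at this
        omega
    rw [prob_hh k hμz hz, prob_hh k hμ₀ (by simp)]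
    exact hh_left k z hz (hz0 0 (by simp)).2

end USFPaper
end

section
/- (Boundary Harnack inequality) Let d ≥ 1. Let 𝒦 be an arbitrary nonempty subset of ([-m+1,0] × [-m+1,m-1]^{d-1}) ∩ Z^d. Then for all m ≥ 1 and all such 𝒦, P^0( S(τ_{Q(0,m-1)}) ∈ R_m | τ_{Q(0,m-1)} < T⁺_𝒦 ) ≥ 1/(2d). -/
open MeasureTheory
open scoped ENNReal Classical

namespace USFPaper

variable {d : ℕ}

/-! ### Deterministic part -/

/-- steps -/
abbrev Step (d : ℕ) := Fin d × Bool

/-- step vector -/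
def vec (a : Step d) : V d := Pi.single a.1 (if a.2 then 1 else -1)

/-- averaging operator, frozen off the cube -/
noncomputable def Top (m : ℕ) : (V d → ℝ) →ₗ[ℝ] (V d → ℝ) where
  toFun g x := if x ∈ cube 0 (m - 1) then (2 * (d : ℝ))⁻¹ * ∑ a : Step d, g (x + vec a) else g x
  map_add' g h := by
    ext x
    by_cases hx : x ∈ cube 0 (m - 1) <;> simp [hx, Finset.sum_add_distrib, mul_add]
  map_smul' c g := by
    ext x
    by_cases hx : x ∈ cube 0 (m - 1)
    · simp only [hx, if_true, Pi.smul_apply, smul_eq_mul, RingHom.id_apply, ← Finset.mul_sum]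
      ring
    · simp [hx]

lemma Top_apply (m : ℕ) (g : V d → ℝ) (x : V d) : Top m g x =
    if x ∈ cube 0 (m - 1) then (2 * (d : ℝ))⁻¹ * ∑ a : Step d, g (x + vec a) else g x := rfl

lemma mem_cube_s2 (m : ℕ) (hm : 1 ≤ m) (x : V d) :
    x ∈ cube 0 (m - 1) ↔ ∀ i, |x i| < (m : ℤ) := by
  simp only [cube, Set.mem_ofPred_eq, Pi.zero_apply, sub_zero]
  refine forall_congr' fun i => ?_
  omega

/-- flip of coordinate `i` -/
def flip (i : Fin d) (x : V d) : V d := fun j => if j = i then - x j else x j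

/-- swap of coordinates -/
def swp (i j : Fin d) (x : V d) : V d := fun k => x (Equiv.swap i j k)

lemma flip_cube (m : ℕ) (i : Fin d) (x : V d) :
    flip i x ∈ cube 0 (m - 1) ↔ x ∈ cube 0 (m - 1) := by
  simp only [cube, Set.mem_ofPred_eq, Pi.zero_apply, sub_zero]
  refine forall_congr' fun j => ?_
  unfold flip
  split_ifs <;> simp

lemma swp_cube (m : ℕ) (i j : Fin d) (x : V d) :
    swp i j x ∈ cube 0 (m - 1) ↔ x ∈ cube 0 (m - 1) := by
  simp only [cube, Set.mem_ofPred_eq, Pi.zero_apply, sub_zero, swp]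
  exact (Equiv.swap i j).forall_congr_right (q := fun k => |x k| ≤ ((m - 1 : ℕ) : ℤ))

lemma sum_flip (i : Fin d) (g : V d → ℝ) (x : V d) :
    ∑ a : Step d, g (flip i x + vec a) = ∑ a : Step d, g (flip i (x + vec a)) := by
  have hinv : Function.Involutive
      (fun a : Step d => ((a.1, if a.1 = i then !a.2 else a.2) : Step d)) := by
    rintro ⟨k, b⟩
    by_cases h : k = i <;> simp [h]
  refine Fintype.sum_equiv hinv.toPerm _ _ ?_
  rintro ⟨k, b⟩
  congr 1
  ext j
  simp only [flip, vec, Function.Involutive.coe_toPerm, Pi.add_apply, Pi.single_apply]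
  by_cases hk : k = i <;> by_cases hj : j = i <;> by_cases hjk : j = k <;> cases b <;>
    simp_all <;> ring

lemma sum_swp (i j : Fin d) (g : V d → ℝ) (x : V d) :
    ∑ a : Step d, g (swp i j x + vec a) = ∑ a : Step d, g (swp i j (x + vec a)) := by
  refine Fintype.sum_equiv ((Equiv.swap i j).prodCongr (Equiv.refl _)) _ _ ?_
  rintro ⟨k, b⟩
  congr 1
  ext l
  simp only [swp, vec, Pi.add_apply, Pi.single_apply, Equiv.prodCongr_apply, Prod.map,
    Equiv.refl_apply, EmbeddingLike.apply_eq_iff_eq]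

lemma Top_comp_flip (m : ℕ) (i : Fin d) (g : V d → ℝ) (x : V d) :
    Top m g (flip i x) = Top m (fun y => g (flip i y)) x := by
  simp only [Top_apply, flip_cube, sum_flip]

lemma Top_comp_swp (m : ℕ) (i j : Fin d) (g : V d → ℝ) (x : V d) :
    Top m g (swp i j x) = Top m (fun y => g (swp i j y)) x := by
  simp only [Top_apply, swp_cube, sum_swp]

/-- indicator of a proposition -/
noncomputable def ind (p : Prop) : ℝ := if p then 1 else 0

lemma ind_true {p : Prop} (h : p) : ind p = 1 := if_pos h
lemma ind_false {p : Prop} (h : ¬ p) : ind p = 0 := if_neg h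

/-- invariants of the comparison of two coordinates -/
structure InvD (p q : Fin d) (g : V d → ℝ) : Prop where
  flip : ∀ i x, g (flip i x) = g x
  swp : ∀ x, g (swp p q x) = - g x
  nonpos : ∀ x, |x p| ≤ |x q| → g x ≤ 0

lemma Top_neg_fun (m : ℕ) (g : V d → ℝ) (x : V d) : Top m (fun y => - g y) x = - Top m g x := by
  have : (fun y => - g y) = - g := rfl
  rw [this, map_neg]; rfl

lemma eq_zero_of_abs_eq {p q : Fin d} {g : V d → ℝ} (h1 : ∀ i x, g (flip i x) = g x)
    (h2 : ∀ x, g (swp p q x) = - g x) (x : V d) (hx : |x p| = |x q|) : g x = 0 := by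
  have key : g (swp p q x) = g x := by
    rcases abs_eq_abs.1 hx with h | h
    · congr 1
      ext k
      simp only [swp]
      rw [Equiv.swap_apply_def]
      split_ifs <;> simp_all
    · by_cases hpq : p = q
      · subst hpq
        congr 1
        ext k
        simp [swp]
      · rw [← h1 p x, ← h1 q]
        congr 1
        ext k
        simp only [swp, flip]
        rw [Equiv.swap_apply_def]
        split_ifs <;> simp_all
  have := h2 x
  linarith

lemma InvD.step {p q : Fin d} {g : V d → ℝ} (m : ℕ) (h : InvD p q g) : InvD p q (Top m g) where
  flip i x := by rw [Top_comp_flip]; simp only [h.flip]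
  swp x := by rw [Top_comp_swp]; simp only [h.swp, Top_neg_fun]
  nonpos x hx := by
    rcases hx.eq_or_lt with hx' | hx'
    · refine (eq_zero_of_abs_eq (p := p) (q := q) (g := Top m g) ?_ ?_ x hx').le
      · intro i x; rw [Top_comp_flip]; simp only [h.flip]
      · intro x; rw [Top_comp_swp]; simp only [h.swp, Top_neg_fun]
    · rw [Top_apply]
      split_ifs with hQ
      · refine mul_nonpos_of_nonneg_of_nonpos (by positivity) (Finset.sum_nonpos fun a _ => ?_)
        apply h.nonpos
        have hpq : p ≠ q := by rintro rfl; exact lt_irrefl _ hx'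
        obtain ⟨k, b⟩ := a
        simp only [vec, Pi.add_apply, Pi.single_apply]
        by_cases h1 : p = k
        · have h2 : ¬ q = k := by rintro rfl; exact hpq h1
          rw [if_pos h1, if_neg h2]
          cases b <;> simp <;> grind
        · rw [if_neg h1]
          cases b <;> by_cases h2 : q = k <;> simp [h2] <;> grind
      · exact h.nonpos x hx

lemma InvD.init (p q : Fin d) (m : ℕ) :
    InvD p q (fun x : V d => ind ((m : ℤ) ≤ |x p|) - ind ((m : ℤ) ≤ |x q|)) where
  flip i x := by
    have : ∀ k, |USFPaper.flip i x k| = |x k| := by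
      intro k; simp only [USFPaper.flip]; split_ifs <;> simp
    simp only [this]
  swp x := by simp [USFPaper.swp]
  nonpos x hx := by
    unfold ind
    split_ifs <;> first | (exfalso; omega) | norm_num

lemma InvD.iter {p q : Fin d} {g : V d → ℝ} (m : ℕ) (h : InvD p q g) (n : ℕ) :
    InvD p q (((Top m) ^ n) g) := by
  induction n with
  | zero => simpa using h
  | succ n ih => rw [pow_succ']; exact ih.step m

lemma iter_anti {p : Fin d} {g : V d → ℝ} (m : ℕ) (h : ∀ x, g (flip p x) = - g x) (n : ℕ) :
    ∀ x, ((Top m) ^ n) g (flip p x) = - ((Top m) ^ n) g x := by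
  induction n with
  | zero => simpa using h
  | succ n ih =>
    intro x
    rw [pow_succ', Module.End.mul_apply, Top_comp_flip]
    simp only [ih, Top_neg_fun]

/-- terminal function -/
noncomputable def fT (m : ℕ) (p : Fin d) (x : V d) : ℝ :=
  ∑ i, ind ((m : ℤ) ≤ |x i|) - 2 * d * ind ((m : ℤ) ≤ x p)

lemma fT_decomp (m : ℕ) (hm : 1 ≤ m) (p : Fin d) :
    fT m p = - (∑ q, (fun x : V d => ind ((m : ℤ) ≤ |x p|) - ind ((m : ℤ) ≤ |x q|)))
      - (d : ℝ) • (fun x : V d => ind ((m : ℤ) ≤ x p) - ind (x p ≤ -(m : ℤ))) := by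
  ext x
  have : ind ((m : ℤ) ≤ |x p|) = ind ((m : ℤ) ≤ x p) + ind (x p ≤ -(m : ℤ)) := by
    unfold ind
    have := abs_cases (x p)
    split_ifs <;> first | (exfalso; omega) | norm_num
  simp only [fT, Pi.sub_apply, Pi.neg_apply, Finset.sum_apply, Pi.smul_apply, smul_eq_mul,
    Finset.sum_sub_distrib, Finset.sum_const, Finset.card_univ, Fintype.card_fin, nsmul_eq_mul,
    this]
  ring

lemma v_plane (m : ℕ) (hm : 1 ≤ m) (p : Fin d) (n : ℕ) :
    (∀ x : V d, x p = 0 → 0 ≤ ((Top m) ^ n) (fT m p) x) ∧ ((Top m) ^ n) (fT m p) 0 = 0 := by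
  have hE : ∀ x : V d, x p = 0 → ((Top m) ^ n)
      (fun x : V d => ind ((m : ℤ) ≤ x p) - ind (x p ≤ -(m : ℤ))) x = 0 := by
    intro x hx
    have h1 := iter_anti (p := p)
      (g := fun x : V d => ind ((m : ℤ) ≤ x p) - ind (x p ≤ -(m : ℤ))) m (by
        intro x
        have e1 : ((m : ℤ) ≤ - x p) = (x p ≤ -(m : ℤ)) := by apply propext; omega
        have e2 : (- x p ≤ -(m : ℤ)) = ((m : ℤ) ≤ x p) := by apply propext; omega
        simp [flip, e1]) n x
    have h2 : flip p x = x := by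
      ext k; simp only [flip]; split_ifs with h
      · subst h; simp [hx]
      · rfl
    rw [h2] at h1
    linarith
  have hdec : ∀ x : V d, x p = 0 → ((Top m) ^ n) (fT m p) x =
      - ∑ q, ((Top m) ^ n) (fun x : V d => ind ((m : ℤ) ≤ |x p|) - ind ((m : ℤ) ≤ |x q|)) x := by
    intro x hx
    rw [fT_decomp m hm p, map_sub, map_neg, map_smul, map_sum]
    simp only [Pi.sub_apply, Pi.neg_apply, Finset.sum_apply, Pi.smul_apply, hE x hx]
    simp
  constructor
  · intro x hx
    rw [hdec x hx, neg_nonneg]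
    refine Finset.sum_nonpos fun q _ => ((InvD.init p q m).iter m n).nonpos x ?_
    simp [hx]
  · rw [hdec 0 rfl, neg_eq_zero]
    refine Finset.sum_eq_zero fun q _ => ?_
    have := (InvD.init p q m).iter m n
    exact eq_zero_of_abs_eq this.flip this.swp 0 rfl

lemma v_half (m : ℕ) (hm : 1 ≤ m) (p : Fin d) (n : ℕ) :
    ∀ x : V d, x p ≤ 0 → 0 ≤ ((Top m) ^ n) (fT m p) x := by
  have h0 : ∀ x : V d, x p ≤ 0 → 0 ≤ fT m p x := by
    intro x hx
    unfold fT
    rw [ind_false (p := (m : ℤ) ≤ x p) (by omega)]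
    have : 0 ≤ ∑ i, ind ((m : ℤ) ≤ |x i|) :=
      Finset.sum_nonneg fun i _ => by unfold ind; split_ifs <;> norm_num
    linarith
  induction n with
  | zero => simpa using h0
  | succ n ih =>
    intro x hx
    rcases hx.eq_or_lt with hx' | hx'
    · exact (v_plane m hm p (n + 1)).1 x hx'
    · rw [pow_succ', Module.End.mul_apply, Top_apply]
      split_ifs with hQ
      · refine mul_nonneg (by positivity) (Finset.sum_nonneg fun a _ => ih _ ?_)
        obtain ⟨k, b⟩ := a
        simp only [vec, Pi.add_apply, Pi.single_apply]
        cases b <;> split_ifs <;> simp_all <;> omega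
      · exact ih x hx

lemma iter_off (m : ℕ) (g : V d → ℝ) (n : ℕ) (x : V d) (hx : x ∉ cube 0 (m - 1)) :
    ((Top m) ^ n) g x = g x := by
  induction n with
  | zero => simp
  | succ n ih => rw [pow_succ', Module.End.mul_apply, Top_apply, if_neg hx, ih]

/-! ### Path counting -/

/-- path with given steps -/
def pathOf : (n : ℕ) → V d → (Fin n → Step d) → ℕ → V d
  | 0, x, _ => fun _ => x
  | n + 1, x, s => fun k => match k with
    | 0 => x
    | k + 1 => pathOf n (x + vec (s 0)) (Fin.tail s) k

lemma pathOf_zero (n : ℕ) (x : V d) (s : Fin n → Step d) : pathOf n x s 0 = x := by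
  cases n <;> rfl

lemma adj_vec (x : V d) (a : Step d) : adj x (x + vec a) := by
  obtain ⟨k, b⟩ := a
  unfold adj
  rw [Finset.sum_eq_single k]
  · cases b <;> simp [vec]
  · intro j _ hj
    simp [vec, hj]
  · simp

lemma vec_inj : Function.Injective (vec : Step d → V d) := by
  rintro ⟨k, b⟩ ⟨l, c⟩ h
  have h1 := congrFun h k
  by_cases hkl : k = l
  · subst hkl
    cases b <;> cases c <;> simp [vec] at h1 ⊢ <;> omega
  · cases b <;> cases c <;> simp [vec, hkl] at h1

lemma pathOf_adj (n : ℕ) : ∀ (x : V d) (s : Fin n → Step d), ∀ i < n,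
    adj (pathOf n x s i) (pathOf n x s (i + 1)) := by
  induction n with
  | zero => intro x s i hi; omega
  | succ n ih =>
    intro x s i hi
    cases i with
    | zero =>
      change adj x (pathOf n _ _ 0)
      rw [pathOf_zero]; exact adj_vec _ _
    | succ i => exact ih _ _ i (by omega)

lemma pathOf_inj (n : ℕ) : ∀ (x : V d) (s t : Fin n → Step d),
    (∀ i ≤ n, pathOf n x s i = pathOf n x t i) → s = t := by
  induction n with
  | zero => intro x s t _; exact Subsingleton.elim _ _
  | succ n ih =>
    intro x s t h
    have h0 : s 0 = t 0 := by
      have : pathOf n (x + vec (s 0)) (Fin.tail s) 0 = pathOf n (x + vec (t 0)) (Fin.tail t) 0 :=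
        h 1 (by omega)
      rw [pathOf_zero, pathOf_zero] at this
      exact vec_inj (add_left_cancel this)
    have h1 : Fin.tail s = Fin.tail t := by
      apply ih (x + vec (s 0))
      intro i hi
      have : pathOf n (x + vec (s 0)) (Fin.tail s) i = pathOf n (x + vec (t 0)) (Fin.tail t) i :=
        h (i + 1) (by omega)
      rw [this, h0]
    rw [← Fin.cons_self_tail s, ← Fin.cons_self_tail t, h0, h1]

/-- cylinder -/
def cyl (n : ℕ) (s : Fin n → Step d) : Set (ℕ → V d) := { ω | ∀ i ≤ n, ω i = pathOf n 0 s i }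

lemma cyl_meas (n : ℕ) (s : Fin n → Step d) : MeasurableSet (cyl n s) := by
  have : cyl n s = ⋂ i : ℕ, ⋂ (_ : i ≤ n), (fun ω : ℕ → V d => ω i) ⁻¹' {pathOf n 0 s i} := by
    ext ω; simp [cyl]
  rw [this]
  refine MeasurableSet.iInter fun i => MeasurableSet.iInter fun _ => ?_
  exact measurable_pi_apply i (measurableSet_singleton _)

lemma cyl_disj (n : ℕ) : Pairwise (Function.onFun Disjoint (cyl (d := d) n)) := by
  intro s t hst
  refine Set.disjoint_left.2 fun ω h1 h2 => hst ?_
  exact pathOf_inj n 0 s t fun i hi => (h1 i hi).symm.trans (h2 i hi)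

lemma cyl_measure {μ : Measure (ℕ → V d)} (hμ : IsSRWLaw μ 0) (n : ℕ) (s : Fin n → Step d) :
    μ (cyl n s) = (2 * (d : ℝ≥0∞))⁻¹ ^ n :=
  hμ.2 n (pathOf n 0 s) (pathOf_zero _ _ _) (pathOf_adj n 0 s)

lemma cyl_cover (hd : 1 ≤ d) {μ : Measure (ℕ → V d)} (hμ : IsSRWLaw μ 0) (n : ℕ) :
    ∀ᵐ ω ∂μ, ω ∈ ⋃ s, cyl (d := d) n s := by
  have := hμ.1
  have hm : MeasurableSet (⋃ s, cyl (d := d) n s) := MeasurableSet.iUnion fun s => cyl_meas n s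
  rw [show (∀ᵐ ω ∂μ, ω ∈ ⋃ s, cyl (d := d) n s) ↔ (⋃ s, cyl (d := d) n s) ∈ ae μ from Iff.rfl]
  rw [mem_ae_iff_prob_eq_one hm, measure_iUnion (cyl_disj n) (cyl_meas n), tsum_fintype]
  simp only [cyl_measure hμ, Finset.sum_const, Finset.card_univ, Fintype.card_fun,
    Fintype.card_prod, Fintype.card_fin, Fintype.card_bool, nsmul_eq_mul]
  push_cast
  rw [← mul_pow, mul_comm (d : ℝ≥0∞) 2, ENNReal.mul_inv_cancel, one_pow]
  · simp; omega
  · exact ENNReal.mul_ne_top (by simp) (by simp)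

lemma det_ae (hd : 1 ≤ d) {μ : Measure (ℕ → V d)} (hμ : IsSRWLaw μ 0) (n : ℕ)
    (B : Set (ℕ → V d)) (hB : ∀ ω ω', (∀ i ≤ n, ω i = ω' i) → (ω ∈ B ↔ ω' ∈ B)) :
    B =ᵐ[μ] ⋃ s ∈ Finset.univ.filter (fun s => pathOf n 0 s ∈ B), cyl (d := d) n s := by
  rw [Filter.eventuallyEq_set]
  filter_upwards [cyl_cover hd hμ n] with ω hω
  simp only [Finset.mem_filter, Finset.mem_univ, true_and, Set.mem_iUnion, exists_prop] at hω ⊢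
  constructor
  · intro h
    obtain ⟨s, hs⟩ := hω
    exact ⟨s, (hB _ _ hs).1 h, hs⟩
  · rintro ⟨s, hs, hs'⟩
    exact (hB _ _ hs').2 hs

lemma det_null (hd : 1 ≤ d) {μ : Measure (ℕ → V d)} (hμ : IsSRWLaw μ 0) (n : ℕ)
    (B : Set (ℕ → V d)) (hB : ∀ ω ω', (∀ i ≤ n, ω i = ω' i) → (ω ∈ B ↔ ω' ∈ B)) :
    NullMeasurableSet B μ := by
  refine NullMeasurableSet.congr (MeasurableSet.nullMeasurableSet ?_) (det_ae hd hμ n B hB).symm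
  exact Finset.measurableSet_biUnion _ fun s _ => cyl_meas n s

lemma det_measure (hd : 1 ≤ d) {μ : Measure (ℕ → V d)} (hμ : IsSRWLaw μ 0) (n : ℕ)
    (B : Set (ℕ → V d)) (hB : ∀ ω ω', (∀ i ≤ n, ω i = ω' i) → (ω ∈ B ↔ ω' ∈ B)) :
    (μ B).toReal = (2 * (d : ℝ))⁻¹ ^ n * ∑ s : Fin n → Step d, ind (pathOf n 0 s ∈ B) := by
  rw [measure_congr (det_ae hd hμ n B hB),
    measure_biUnion_finset (fun s _ t _ h => cyl_disj n h) (fun s _ => cyl_meas n s)]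
  simp only [cyl_measure hμ, Finset.sum_const, nsmul_eq_mul, ind, Finset.sum_boole]
  simp [ENNReal.toReal_mul, ENNReal.toReal_pow, ENNReal.toReal_inv, mul_comm]

/-- exit by time `n` in `R`, avoiding `K` from time `c` on -/
def Ex (c m : ℕ) (K R : Set (V d)) (n : ℕ) (ω : ℕ → V d) : Prop :=
  ∃ j ≤ n, ω j ∉ cube 0 (m - 1) ∧ ω j ∈ R ∧ (∀ i < j, ω i ∈ cube 0 (m - 1)) ∧
    ∀ i, c ≤ i → i ≤ j → ω i ∉ K

lemma Ex_congr (c m : ℕ) (K R : Set (V d)) (n : ℕ) (ω ω' : ℕ → V d) (h : ∀ i ≤ n, ω i = ω' i) :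
    Ex c m K R n ω ↔ Ex c m K R n ω' := by
  have : ∀ ω ω' : ℕ → V d, (∀ i ≤ n, ω i = ω' i) → Ex c m K R n ω → Ex c m K R n ω' := by
    rintro ω ω' h ⟨j, hj, h1, h2, h3, h4⟩
    refine ⟨j, hj, by rwa [← h j hj], by rwa [← h j hj], fun i hi => ?_, fun i hc hi => ?_⟩
    · rw [← h i (by omega)]; exact h3 i hi
    · rw [← h i (by omega)]; exact h4 i hc hi
  exact ⟨this _ _ h, this _ _ fun i hi => (h i hi).symm⟩

lemma Ex_off (m : ℕ) (K R : Set (V d)) (hK : K ⊆ cube 0 (m - 1)) (n : ℕ) (ω : ℕ → V d)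
    (h0 : ω 0 ∉ cube 0 (m - 1)) : Ex 0 m K R n ω ↔ ω 0 ∈ R := by
  constructor
  · rintro ⟨j, hj, h1, h2, h3, h4⟩
    rcases Nat.eq_zero_or_pos j with rfl | hj'
    · exact h2
    · exact absurd (h3 0 hj') h0
  · intro h
    refine ⟨0, by omega, h0, h, fun i hi => by omega, fun i _ hi => ?_⟩
    obtain rfl : i = 0 := by omega
    exact fun hk => h0 (hK hk)

lemma Ex_succ (c m : ℕ) (K R : Set (V d)) (n : ℕ) (ω : ℕ → V d)
    (h0 : ω 0 ∈ cube 0 (m - 1)) (hc : c = 1 ∨ c = 0 ∧ ω 0 ∉ K) :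
    Ex c m K R (n + 1) ω ↔ Ex 0 m K R n (fun k => ω (k + 1)) := by
  constructor
  · rintro ⟨j, hj, h1, h2, h3, h4⟩
    rcases j with _ | j
    · exact absurd h0 h1
    · exact ⟨j, by omega, h1, h2, fun i hi => h3 (i + 1) (by omega),
        fun i _ hi => h4 (i + 1) (by omega) (by omega)⟩
  · rintro ⟨j, hj, h1, h2, h3, h4⟩
    refine ⟨j + 1, by omega, h1, h2, fun i hi => ?_, fun i hci hi => ?_⟩
    · rcases i with _ | i
      · exact h0
      · exact h3 i (by omega)
    · rcases i with _ | i
      · rcases hc with hc | hc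
        · omega
        · exact hc.2
      · exact h4 i (by omega) (by omega)

lemma Ex_K (m : ℕ) (K R : Set (V d)) (n : ℕ) (ω : ℕ → V d) (h0 : ω 0 ∈ K) :
    ¬ Ex 0 m K R n ω := by
  rintro ⟨j, hj, h1, h2, h3, h4⟩
  exact h4 0 le_rfl (by omega) h0

/-- reachable points -/
def good (m : ℕ) (x : V d) : Prop := ∃ i, |x i| ≤ (m : ℤ) ∧ ∀ j ≠ i, |x j| < (m : ℤ)

lemma good_step (m : ℕ) (hm : 1 ≤ m) (x : V d) (hx : x ∈ cube 0 (m - 1)) (a : Step d) :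
    good m (x + vec a) := by
  rw [mem_cube_s2 m hm] at hx
  obtain ⟨k, b⟩ := a
  refine ⟨k, ?_, fun j hj => ?_⟩
  · have := hx k
    cases b <;> simp [vec] <;> grind
  · simpa [vec, hj] using hx j

lemma fT_good (m : ℕ) (hm : 1 ≤ m) (p : Fin d) (hp : (p : ℕ) = 0) (x : V d) (hx : good m x)
    (hQ : x ∉ cube 0 (m - 1)) :
    fT m p x = 1 - 2 * d * ind (x ∈ rightFace 0 m) := by
  obtain ⟨i, h1, h2⟩ := hx
  rw [mem_cube_s2 m hm] at hQ
  have h3 : (m : ℤ) ≤ |x i| := by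
    by_contra h
    apply hQ
    intro j
    by_cases hj : j = i
    · subst hj; omega
    · exact h2 j hj
  unfold fT
  congr 1
  · rw [Finset.sum_eq_single i]
    · exact ind_true h3
    · intro j _ hj
      exact ind_false (by have := h2 j hj; omega)
    · simp
  · have hall : ∀ j, |x j| ≤ (m : ℤ) := fun j => by
      by_cases hj : j = i
      · subst hj; exact h1
      · exact (h2 j hj).le
    have : ((m : ℤ) ≤ x p) = (x ∈ rightFace 0 m) := by
      apply propext
      simp only [rightFace, cube, Set.mem_ofPred_eq, Pi.zero_apply, sub_zero, zero_add]
      constructor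
      · intro h
        refine ⟨hall, fun j hj => ?_⟩
        obtain rfl : j = p := Fin.ext (by omega)
        have := hall j
        have := le_abs_self (x j)
        omega
      · intro h
        rw [h.2 p hp]
    rw [this]

lemma fT_cube (m : ℕ) (hm : 1 ≤ m) (p : Fin d) (x : V d) (hx : x ∈ cube 0 (m - 1)) :
    fT m p x = 0 := by
  rw [mem_cube_s2 m hm] at hx
  unfold fT
  rw [Finset.sum_eq_zero, ind_false]
  · simp
  · have := hx p
    have := le_abs_self (x p)
    omega
  · intro i _
    exact ind_false (by have := hx i; omega)

/-- path functional -/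
noncomputable def Gf (c m : ℕ) (K : Set (V d)) (n : ℕ) (ω : ℕ → V d) : ℝ :=
  ind (Ex c m K Set.univ n ω) - 2 * d * ind (Ex c m K (rightFace 0 m) n ω)

lemma sum_succ (n : ℕ) (F : (ℕ → V d) → ℝ) (x : V d) (F' : (ℕ → V d) → ℝ)
    (hF : ∀ ω, ω 0 = x → F ω = F' (fun k => ω (k + 1))) :
    ∑ s : Fin (n + 1) → Step d, F (pathOf (n + 1) x s) =
      ∑ a : Step d, ∑ s : Fin n → Step d, F' (pathOf n (x + vec a) s) := by
  rw [← (Fin.consEquiv (fun _ : Fin (n + 1) => Step d)).sum_comp, Fintype.sum_prod_type]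
  refine Finset.sum_congr rfl fun a _ => Finset.sum_congr rfl fun s _ => ?_
  rw [hF _ (pathOf_zero _ _ _)]
  rfl

lemma main_ind (hd : 1 ≤ d) (m : ℕ) (hm : 1 ≤ m) (p : Fin d) (hp : (p : ℕ) = 0) (K : Set (V d))
    (hK : K ⊆ cube 0 (m - 1)) (hK0 : ∀ z ∈ K, z p ≤ 0) (n : ℕ) :
    ∀ x : V d, good m x → ∑ s : Fin n → Step d, Gf 0 m K n (pathOf n x s) ≤
      (2 * (d : ℝ)) ^ n * ((Top m) ^ n) (fT m p) x := by
  have hoff : ∀ n (x : V d), good m x → x ∉ cube 0 (m - 1) →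
      ∑ s : Fin n → Step d, Gf 0 m K n (pathOf n x s) ≤
      (2 * (d : ℝ)) ^ n * ((Top m) ^ n) (fT m p) x := by
    intro n x hx hQ
    rw [iter_off m _ _ _ hQ, fT_good m hm p hp x hx hQ]
    have : ∀ s : Fin n → Step d, Gf 0 m K n (pathOf n x s) =
        1 - 2 * d * ind (x ∈ rightFace 0 m) := by
      intro s
      unfold Gf
      have h0 : pathOf n x s 0 ∉ cube 0 (m - 1) := by rwa [pathOf_zero]
      rw [ind_true ((Ex_off m K _ hK n _ h0).2 (Set.mem_univ _)),
        propext (Ex_off m K (rightFace 0 m) hK n _ h0), pathOf_zero]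
    simp only [this, Finset.sum_const, Finset.card_univ, Fintype.card_fun, Fintype.card_prod,
      Fintype.card_fin, Fintype.card_bool, nsmul_eq_mul]
    push_cast
    rw [mul_comm (d : ℝ) 2]
  induction n with
  | zero =>
    intro x hx
    by_cases hQ : x ∈ cube 0 (m - 1)
    · have : ∀ R : Set (V d), ∀ s : Fin 0 → Step d, ¬ Ex 0 m K R 0 (pathOf 0 x s) := by
        rintro R s ⟨j, hj, h1, -⟩
        exact h1 hQ
      simp [Gf, ind_false (this _ _), fT_cube m hm p x hQ]
    · exact hoff 0 x hx hQ
  | succ n ih =>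
    intro x hx
    by_cases hQ : x ∈ cube 0 (m - 1)
    · by_cases hxK : x ∈ K
      · have : ∀ s : Fin (n + 1) → Step d, Gf 0 m K (n + 1) (pathOf (n + 1) x s) = 0 := by
          intro s
          unfold Gf
          have h0 : pathOf (n + 1) x s 0 ∈ K := by rwa [pathOf_zero]
          rw [ind_false (Ex_K m K _ _ _ h0), ind_false (Ex_K m K _ _ _ h0)]
          simp
        simp only [this, Finset.sum_const_zero]
        exact mul_nonneg (by positivity) (v_half m hm p _ x (hK0 x hxK))
      · rw [sum_succ n _ x (Gf 0 m K n)]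
        · rw [pow_succ' (Top m), Module.End.mul_apply, Top_apply, if_pos hQ]
          have hd' : (0 : ℝ) < 2 * d := by positivity
          rw [pow_succ, mul_assoc, mul_inv_cancel_left₀ hd'.ne', Finset.mul_sum]
          exact Finset.sum_le_sum fun a _ => ih _ (good_step m hm x hQ a)
        · intro ω hω
          unfold Gf
          rw [propext (Ex_succ 0 m K Set.univ n ω (by rwa [hω]) (Or.inr ⟨rfl, by rwa [hω]⟩)),
            propext (Ex_succ 0 m K (rightFace 0 m) n ω (by rwa [hω])
              (Or.inr ⟨rfl, by rwa [hω]⟩))]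
    · exact hoff _ x hx hQ

lemma zero_cube (m : ℕ) : (0 : V d) ∈ cube 0 (m - 1) := by intro i; simp

lemma main_sum (hd : 1 ≤ d) (m : ℕ) (hm : 1 ≤ m) (p : Fin d) (hp : (p : ℕ) = 0) (K : Set (V d))
    (hK : K ⊆ cube 0 (m - 1)) (hK0 : ∀ z ∈ K, z p ≤ 0) (n : ℕ) :
    ∑ s : Fin (n + 1) → Step d, Gf 1 m K (n + 1) (pathOf (n + 1) 0 s) ≤ 0 := by
  have hQ : (0 : V d) ∈ cube 0 (m - 1) := zero_cube m
  have hz := (v_plane m hm p (n + 1)).2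
  have hd' : (0 : ℝ) < 2 * d := by positivity
  rw [pow_succ' (Top m), Module.End.mul_apply, Top_apply, if_pos hQ, mul_eq_zero] at hz
  rw [sum_succ n _ 0 (Gf 0 m K n)]
  · calc _ ≤ ∑ a : Step d, (2 * (d : ℝ)) ^ n * ((Top m) ^ n) (fT m p) (0 + vec a) :=
        Finset.sum_le_sum fun a _ => main_ind hd m hm p hp K hK hK0 n _ (good_step m hm 0 hQ a)
      _ = 0 := by
        rw [← Finset.mul_sum, hz.resolve_left (inv_ne_zero hd'.ne'), mul_zero]
  · intro ω hω
    unfold Gf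
    rw [propext (Ex_succ 1 m K Set.univ n ω (by rwa [hω]) (Or.inl rfl)),
      propext (Ex_succ 1 m K (rightFace 0 m) n ω (by rwa [hω]) (Or.inl rfl))]

lemma main_measure (hd : 1 ≤ d) (m : ℕ) (hm : 1 ≤ m) (p : Fin d) (hp : (p : ℕ) = 0) (K : Set (V d))
    (hK : K ⊆ cube 0 (m - 1)) (hK0 : ∀ z ∈ K, z p ≤ 0) {μ : Measure (ℕ → V d)}
    (hμ : IsSRWLaw μ 0) (n : ℕ) :
    (μ {ω | Ex 1 m K Set.univ (n + 1) ω}).toReal ≤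
      2 * d * (μ {ω | Ex 1 m K (rightFace 0 m) (n + 1) ω}).toReal := by
  rw [det_measure hd hμ (n + 1) {ω | Ex 1 m K Set.univ (n + 1) ω} (fun ω ω' h => Ex_congr 1 m K Set.univ (n + 1) ω ω' h),
    det_measure hd hμ (n + 1) {ω | Ex 1 m K (rightFace 0 m) (n + 1) ω}
      (fun ω ω' h => Ex_congr 1 m K (rightFace 0 m) (n + 1) ω ω' h)]
  have h := main_sum hd m hm p hp K hK hK0 n
  simp only [Gf, Finset.sum_sub_distrib, ← Finset.mul_sum] at h
  have h2 : (0 : ℝ) ≤ (2 * (d : ℝ))⁻¹ ^ (n + 1) := by positivity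
  have := mul_nonpos_of_nonneg_of_nonpos h2 h
  simp only [Set.mem_ofPred_eq]
  linarith

lemma event_s (m : ℕ) (K : Set (V d)) (ω : ℕ → V d) :
    exitTimeE (cube 0 (m - 1)) ω < hitTimePosE K ω ↔ ∃ n, Ex 1 m K Set.univ (n + 1) ω := by
  unfold exitTimeE hitTimePosE
  constructor
  · intro h
    split_ifs at h with h1 h2 h2
    · refine ⟨Nat.find h1, Nat.find h1, by omega, Nat.find_spec h1, trivial, fun i hi => ?_,
        fun i hi hi' hk => ?_⟩
      · exact not_not.1 (Nat.find_min h1 hi)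
      · have : Nat.find h2 ≤ i := Nat.find_min' h2 ⟨hi, hk⟩
        have h3 : Nat.find h1 < Nat.find h2 := by exact_mod_cast h
        omega
    · refine ⟨Nat.find h1, Nat.find h1, by omega, Nat.find_spec h1, trivial, fun i hi => ?_,
        fun i hi hi' hk => ?_⟩
      · exact not_not.1 (Nat.find_min h1 hi)
      · exact h2 ⟨i, hi, hk⟩
    · exact absurd h not_top_lt
    · exact absurd h not_top_lt
  · rintro ⟨n, j, hj, h1, -, h3, h4⟩
    have hex : ∃ j, ω j ∉ cube 0 (m - 1) := ⟨j, h1⟩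
    have hle : Nat.find hex ≤ j := Nat.find_min' hex h1
    rw [dif_pos hex]
    split_ifs with h2
    · have : j < Nat.find h2 := by
        by_contra hlt
        exact h4 _ (Nat.find_spec h2).1 (by omega) (Nat.find_spec h2).2
      exact_mod_cast lt_of_le_of_lt hle this
    · exact ENat.coe_lt_top _

lemma event_exit (m : ℕ) (ω : ℕ → V d) (j : ℕ) (h1 : ω j ∉ cube 0 (m - 1))
    (h3 : ∀ i < j, ω i ∈ cube 0 (m - 1)) : exitTime (cube 0 (m - 1)) ω = j := by
  have hex : ∃ j, ω j ∉ cube 0 (m - 1) := ⟨j, h1⟩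
  unfold exitTime exitTimeE
  rw [dif_pos hex, ENat.toNat_coe]
  exact (Nat.find_eq_iff hex).2 ⟨h1, fun i hi => not_not.2 (h3 i hi)⟩

lemma event_t (m : ℕ) (K : Set (V d)) (ω : ℕ → V d) (n : ℕ)
    (h : Ex 1 m K (rightFace 0 m) n ω) :
    ω (exitTime (cube 0 (m - 1)) ω) ∈ rightFace 0 m := by
  obtain ⟨j, hj, h1, h2, h3, h4⟩ := h
  rwa [event_exit m ω j h1 h3]

lemma event_pos (hd : 1 ≤ d) (m : ℕ) (hm : 1 ≤ m) (p : Fin d) (K : Set (V d))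
    (hK0 : ∀ z ∈ K, z p ≤ 0) {μ : Measure (ℕ → V d)} (hμ : IsSRWLaw μ 0) :
    μ {ω | exitTimeE (cube 0 (m - 1)) ω < hitTimePosE K ω} ≠ 0 := by
  have h := hμ.2 m (fun k => Pi.single p (k : ℤ)) (by simp) (by
    intro i _
    have := adj_vec (Pi.single p (i : ℤ) : V d) (p, true)
    simpa [vec, ← Pi.single_add] using this)
  intro h0
  have hsub : {ω : ℕ → V d | ∀ i ≤ m, ω i = Pi.single p (i : ℤ)} ⊆
      {ω | exitTimeE (cube 0 (m - 1)) ω < hitTimePosE K ω} := by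
    intro ω hω
    simp only [Set.mem_ofPred_eq] at hω
    refine (event_s m K ω).2 ⟨m, m, by omega, ?_, trivial, fun i hi => ?_, fun i hi hi' hk => ?_⟩
    · rw [hω m le_rfl, mem_cube_s2 m hm]
      intro hh
      simpa using hh p
    · rw [hω i hi.le, mem_cube_s2 m hm]
      intro j
      rw [Pi.single_apply]
      split_ifs
      · rw [Nat.abs_cast]; exact_mod_cast hi
      · simp; omega
    · have := hK0 _ hk
      rw [hω i hi'] at this
      simp at this
      omega
  have h2 := measure_mono_null hsub h0
  rw [h] at h2
  have h3 : (2 * (d : ℝ≥0∞))⁻¹ ≠ 0 :=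
    ENNReal.inv_ne_zero.2 (ENNReal.mul_ne_top (by simp) (by simp))
  exact pow_ne_zero m h3 h2

/-- **Boundary Harnack inequality** (Lemma 3.4).  Let `d ≥ 1`.  For every `m ≥ 1` and
every nonempty `𝒦 ⊆ ([-m+1,0] × [-m+1,m-1]^{d-1}) ∩ ℤ^d`,
`P^0( S(τ_{Q(0,m-1)}) ∈ R_m | τ_{Q(0,m-1)} < T⁺_𝒦 ) ≥ 1/(2d)`. -/
theorem boundary_harnack :
    ∀ d m : ℕ, 1 ≤ d → 1 ≤ m →
    ∀ 𝒦 : Set (V d), 𝒦.Nonempty →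
      (∀ z ∈ 𝒦,
        (∀ i : Fin d, (i : ℕ) = 0 → -(m : ℤ) + 1 ≤ z i ∧ z i ≤ 0) ∧
        (∀ i : Fin d, (i : ℕ) ≠ 0 → -(m : ℤ) + 1 ≤ z i ∧ z i ≤ (m : ℤ) - 1)) →
    ∀ μ : Measure (ℕ → V d), IsSRWLaw μ 0 →
      1 / (2 * (d : ℝ)) ≤
        (ProbabilityTheory.cond μ
            { ω | exitTimeE (cube 0 (m - 1)) ω < hitTimePosE 𝒦 ω }
            { ω | ω (exitTime (cube 0 (m - 1)) ω) ∈ rightFace 0 m }).toReal := by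
  intro d m hd hm K _ hKK μ hμ
  have := hμ.1
  set p : Fin d := ⟨0, hd⟩ with hpdef
  have hp : (p : ℕ) = 0 := rfl
  have hK : K ⊆ cube 0 (m - 1) := by
    intro z hz
    rw [mem_cube_s2 m hm]
    intro i
    rw [abs_lt]
    by_cases hi : (i : ℕ) = 0
    · have := (hKK z hz).1 i hi
      omega
    · have := (hKK z hz).2 i hi
      omega
  have hK0 : ∀ z ∈ K, z p ≤ 0 := fun z hz => ((hKK z hz).1 p hp).2
  set s := { ω : ℕ → V d | exitTimeE (cube 0 (m - 1)) ω < hitTimePosE K ω } with hs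
  set t := { ω : ℕ → V d | ω (exitTime (cube 0 (m - 1)) ω) ∈ rightFace 0 m } with ht
  have hsU : s = ⋃ n, {ω | Ex 1 m K Set.univ (n + 1) ω} := by
    ext ω
    simp only [hs, Set.mem_ofPred_eq, Set.mem_iUnion]
    exact event_s m K ω
  have hmono : Monotone fun n => {ω : ℕ → V d | Ex 1 m K Set.univ (n + 1) ω} := by
    rintro a b hab ω ⟨j, hj, h⟩
    exact ⟨j, by omega, h⟩
  have hnull : NullMeasurableSet s μ := by
    rw [hsU]
    exact NullMeasurableSet.iUnion fun n => det_null hd hμ (n + 1) _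
      (fun ω ω' h => Ex_congr 1 m K Set.univ (n + 1) ω ω' h)
  have hpos : μ s ≠ 0 := event_pos hd m hm p K hK0 hμ
  have hd' : (0 : ℝ) < 2 * d := by positivity
  have hspos : 0 < (μ s).toReal := ENNReal.toReal_pos hpos (measure_ne_top _ _)
  have hle : (μ s).toReal ≤ 2 * d * (μ (t ∩ s)).toReal := by
    have hlim := tendsto_measure_iUnion_atTop (μ := μ) hmono
    rw [← hsU] at hlim
    have hlim' := (ENNReal.tendsto_toReal (measure_ne_top μ s)).comp hlim
    refine le_of_tendsto' hlim' fun n => ?_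
    refine (main_measure hd m hm p hp K hK hK0 hμ n).trans ?_
    refine mul_le_mul_of_nonneg_left ?_ hd'.le
    refine ENNReal.toReal_mono (measure_ne_top _ _) (measure_mono ?_)
    intro ω hω
    refine ⟨event_t m K ω _ hω, ?_⟩
    rw [hsU, Set.mem_iUnion]
    obtain ⟨j, hj, h1, h2, h3⟩ := hω
    exact ⟨n, j, hj, h1, trivial, h3⟩
  have hc : ProbabilityTheory.cond μ s t = (μ s)⁻¹ * μ (t ∩ s) := by
    rw [ProbabilityTheory.cond, Measure.smul_apply, smul_eq_mul, Measure.restrict_apply₀' hnull]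
  rw [hc, ENNReal.toReal_mul, ENNReal.toReal_inv, div_le_iff₀ hd']
  rw [mul_assoc, mul_comm, ← div_eq_mul_inv, le_div_iff₀ hspos]
  linarith

end USFPaper
end
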